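/- For each n ≥ 1, the geometric realization of the triple (P⟨n⟩, ∂P⟨n⟩, EP⟨n⟩) consisting of the n-th folding polytope, its boundary, and its edge, is homeomorphic to the triple (B^n, S^{n−1}, B^{n−1}_+), where B^n is the unit n-ball, S^{n−1} its boundary sphere, and B^{n−1}_+ the closed upper hemisphere of S^{n−1}. -/

import Mathlib

/-!
STATEMENT 11 (Lemma 4.9 of the paper).  For each `n ≥ 1`, the realization of the
triple `(P⟨n⟩, ∂P⟨n⟩, EP⟨n⟩)` — the `n`-th folding polytope, its boundary, and its
edge — is homeomorphic to `(B^n, S^{n−1}, B^{n−1}_+)`, where `B^n` is the unit `n`-ball,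
`S^{n−1}` its boundary sphere, and `B^{n−1}_+` the closed upper hemisphere of `S^{n−1}`.

`P⟨n⟩` is obtained from `n+1` copies `Δⁿ_{(0)}, …, Δⁿ_{(n)}` of the standard topological
`n`-simplex by identifying the `n`-th facet `∂_n Δⁿ_{(k)}` with the `1`-facet
`∂_1 Δⁿ_{(k+1)}` (for `0 ≤ k < n`) via the order-preserving vertex correspondence;
its edge is the union of the facets `∂_0 Δⁿ_{(k)}` for `k = 1, …, n`, and its boundary
is the union of all the non-identified facets.
-/

noncomputable section

/-- The topological standard `n`-simplex. -/
def TopSimplex (n : ℕ) : Type :=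
  {x : Fin (n + 1) → ℝ // (∀ i, 0 ≤ x i) ∧ ∑ i, x i = 1}

instance (n : ℕ) : TopologicalSpace (TopSimplex n) :=
  inferInstanceAs (TopologicalSpace
    {x : Fin (n + 1) → ℝ // (∀ i, 0 ≤ x i) ∧ ∑ i, x i = 1})

/-- `x` lies in the `n`-th facet, `y` in the `1`-facet, and they correspond under the
order-preserving bijection of the two facets (vertex `0 ↦ 0`, vertex `i ↦ i+1` for
`1 ≤ i ≤ n−1`). -/
def GluePt (n : ℕ) (x y : TopSimplex n) : Prop :=
  x.1 (Fin.last n) = 0 ∧ y.1 1 = 0 ∧ y.1 0 = x.1 0 ∧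
    ∀ i : Fin (n + 1), 1 ≤ (i : ℕ) → (i : ℕ) ≤ n - 1 → y.1 (i + 1) = x.1 i

/-- The gluing relation on the disjoint union of the `n+1` copies of `Δⁿ`:
identify `∂_n Δⁿ_{(k)}` with `∂_1 Δⁿ_{(k+1)}` for `0 ≤ k < n`. -/
def GlueRel (n : ℕ) :
    (Fin (n + 1) × TopSimplex n) → (Fin (n + 1) × TopSimplex n) → Prop :=
  fun p q =>
    ((p.1 : ℕ) + 1 = (q.1 : ℕ) ∧ GluePt n p.2 q.2) ∨
    ((q.1 : ℕ) + 1 = (p.1 : ℕ) ∧ GluePt n q.2 p.2)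

/-- The `n`-th folding polytope `P⟨n⟩`. -/
def FoldingPolytope (n : ℕ) : Type := Quot (GlueRel n)

instance (n : ℕ) : TopologicalSpace (FoldingPolytope n) :=
  inferInstanceAs (TopologicalSpace (Quot (GlueRel n)))

/-- The boundary `∂P⟨n⟩`: the union of all the non-identified facets. -/
def foldingBoundary (n : ℕ) : Set (FoldingPolytope n) :=
  Quot.mk _ '' {p : Fin (n + 1) × TopSimplex n |
    ∃ j : Fin (n + 1), p.2.1 j = 0 ∧
      ¬(j = Fin.last n ∧ p.1 ≠ Fin.last n) ∧ ¬(j = 1 ∧ p.1 ≠ 0)}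

/-- The edge `EP⟨n⟩`: the union of the facets `∂_0 Δⁿ_{(k)}` for `k = 1, …, n`. -/
def foldingEdge (n : ℕ) : Set (FoldingPolytope n) :=
  Quot.mk _ '' {p : Fin (n + 1) × TopSimplex n | p.1 ≠ 0 ∧ p.2.1 0 = 0}

namespace FP
set_option linter.unusedSectionVars false
open Finset

theorem compactSpace_topSimplex (n : ℕ) : CompactSpace (TopSimplex n) := by
  have h : IsCompact (stdSimplex ℝ (Fin (n + 1))) := isCompact_stdSimplex ℝ (Fin (n + 1))
  exact isCompact_iff_compactSpace.mp h

/-- Reduction of the theorem to a map from the disjoint union of simplices. -/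
theorem finish (n : ℕ) (hn : 1 ≤ n)
    (F : Fin (n + 1) × TopSimplex n → EuclideanSpace ℝ (Fin n)) (hc : Continuous F)
    (hglue : ∀ p q, GlueRel n p q → F p = F q)
    (hinj : ∀ p q, F p = F q → Quot.mk (GlueRel n) p = Quot.mk (GlueRel n) q)
    (hball : ∀ p, ‖F p‖ ≤ 1)
    (hsurj : ∀ x, ‖x‖ ≤ 1 → ∃ p, F p = x)
    (hB : ∀ x, ‖x‖ ≤ 1 → ((∃ p : Fin (n + 1) × TopSimplex n, (∃ j : Fin (n + 1), p.2.1 j = 0 ∧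
      ¬(j = Fin.last n ∧ p.1 ≠ Fin.last n) ∧ ¬(j = 1 ∧ p.1 ≠ 0)) ∧ F p = x) ↔ ‖x‖ = 1))
    (hE : ∀ x, ‖x‖ ≤ 1 → ((∃ p : Fin (n + 1) × TopSimplex n, (p.1 ≠ 0 ∧ p.2.1 0 = 0) ∧ F p = x) ↔
      (‖x‖ = 1 ∧ 0 ≤ x ⟨n - 1, Nat.sub_lt hn Nat.one_pos⟩))) :
    ∃ e : FoldingPolytope n ≃ₜ (Metric.closedBall (0 : EuclideanSpace ℝ (Fin n)) 1),
      ⇑e '' foldingBoundary n =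
        {x : Metric.closedBall (0 : EuclideanSpace ℝ (Fin n)) 1 |
          (x : EuclideanSpace ℝ (Fin n)) ∈
            Metric.sphere (0 : EuclideanSpace ℝ (Fin n)) 1} ∧
      ⇑e '' foldingEdge n =
        {x : Metric.closedBall (0 : EuclideanSpace ℝ (Fin n)) 1 |
          (x : EuclideanSpace ℝ (Fin n)) ∈
            Metric.sphere (0 : EuclideanSpace ℝ (Fin n)) 1 ∧
          0 ≤ (x : EuclideanSpace ℝ (Fin n)) ⟨n - 1, Nat.sub_lt hn Nat.one_pos⟩} := by
  have := compactSpace_topSimplex n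
  have : CompactSpace (FoldingPolytope n) :=
    inferInstanceAs (CompactSpace (Quot (GlueRel n)))
  let G : FoldingPolytope n → Metric.closedBall (0 : EuclideanSpace ℝ (Fin n)) 1 :=
    Quot.lift (fun p => ⟨F p, by simpa using hball p⟩)
      (fun p q h => Subtype.ext (hglue p q h))
  have hGmk : ∀ p, (G (Quot.mk _ p) : EuclideanSpace ℝ (Fin n)) = F p := fun p => rfl
  have hGc : Continuous G :=
    continuous_quot_lift _ (hc.subtype_mk _)
  have hGb : Function.Bijective G := by
    constructor
    · rintro ⟨p⟩ ⟨q⟩ h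
      exact hinj p q (congrArg Subtype.val h)
    · rintro ⟨x, hx⟩
      obtain ⟨p, hp⟩ := hsurj x (by simpa using hx)
      exact ⟨Quot.mk _ p, Subtype.ext hp⟩
  let e := Continuous.homeoOfEquivCompactToT2 (f := Equiv.ofBijective G hGb) hGc
  have he : ∀ p, (e (Quot.mk _ p) : EuclideanSpace ℝ (Fin n)) = F p := fun p => rfl
  refine ⟨e, ?_, ?_⟩
  · ext ⟨x, hx⟩
    have hx' : ‖x‖ ≤ 1 := by simpa using hx
    simp only [foldingBoundary, Set.mem_image, Set.mem_ofPred_eq, mem_sphere_zero_iff_norm]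
    rw [← hB x hx']
    constructor
    · rintro ⟨_, ⟨p, hp, rfl⟩, h⟩
      exact ⟨p, hp, by rw [← he, h]⟩
    · rintro ⟨p, hp, h⟩
      exact ⟨_, ⟨p, hp, rfl⟩, Subtype.ext (by rw [he, h])⟩
  · ext ⟨x, hx⟩
    have hx' : ‖x‖ ≤ 1 := by simpa using hx
    simp only [foldingEdge, Set.mem_image, Set.mem_ofPred_eq, mem_sphere_zero_iff_norm]
    rw [← hE x hx']
    constructor
    · rintro ⟨_, ⟨p, hp, rfl⟩, h⟩
      exact ⟨p, hp, by rw [← he, h]⟩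
    · rintro ⟨p, hp, h⟩
      exact ⟨_, ⟨p, hp, rfl⟩, Subtype.ext (by rw [he, h])⟩

/-! ### Combinatorics of the map to the prism -/

variable {m : ℕ} [NeZero m]

def hk (s : ZMod m → ℝ) (k : ℕ) : ℝ := ∑ j ∈ range k, s (1 - (j : ZMod m))

def S (k : ℕ) (x : Fin (m + 2) → ℝ) : ZMod m → ℝ := fun r =>
  x ⟨(r + (k : ZMod m) - 1).val + 1, by have := ZMod.val_lt (r + (k : ZMod m) - 1); omega⟩ +
    if r + (k : ZMod m) - 1 = 0 then x (Fin.last (m + 1)) else 0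

theorem hk_succ (s : ZMod m → ℝ) (k : ℕ) : hk s (k + 1) = hk s k + s (1 - k) := by
  simp [hk, sum_range_succ]

theorem hk_mono {s : ZMod m → ℝ} (hs : ∀ r, 0 ≤ s r) {a b : ℕ} (h : a ≤ b) : hk s a ≤ hk s b :=
  monotone_nat_of_le_succ (f := hk s) (fun k => by rw [hk_succ]; linarith [hs (1 - k)]) h

theorem cover (k : ℕ) (r : ZMod m) : ∃ i : ℕ, 1 ≤ i ∧ i ≤ m ∧ r = (i : ZMod m) - k := by
  refine ⟨(r + (k : ZMod m) - 1).val + 1, by omega, ZMod.val_lt (r + (k : ZMod m) - 1), ?_⟩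
  push_cast
  rw [ZMod.natCast_zmod_val]
  ring

theorem S_apply (k : ℕ) (x : Fin (m + 2) → ℝ) (i : ℕ) (h1 : 1 ≤ i) (h2 : i ≤ m) :
    S k x ((i : ZMod m) - k) = x ⟨i, by omega⟩ +
      if i = 1 then x (Fin.last (m + 1)) else 0 := by
  obtain ⟨a, rfl⟩ : ∃ a, i = a + 1 := ⟨i - 1, by omega⟩
  have e : ((a + 1 : ℕ) : ZMod m) - k + k - 1 = (a : ZMod m) := by push_cast; ring
  have hv : ((a : ZMod m)).val = a := ZMod.val_natCast_of_lt (by omega)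
  have hz : (a : ZMod m) = 0 ↔ a = 0 := by
    rw [← ZMod.val_eq_zero, hv]
  unfold S
  simp only [e, hv, hz]
  simp

theorem S_one (k : ℕ) (x : Fin (m + 2) → ℝ) :
    S k x (1 - k) = x 1 + x (Fin.last (m + 1)) := by
  have := S_apply k x 1 le_rfl (NeZero.one_le)
  simp only [Nat.cast_one, if_true] at this
  rw [this]
  rfl

theorem S_sum (k : ℕ) (x : Fin (m + 2) → ℝ) : ∑ r, S k x r = ∑ i, x i - x 0 := by
  rw [Fin.sum_univ_succ, Fin.sum_univ_castSucc]
  simp only [S, sum_add_distrib]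
  have e1 : ∑ r : ZMod m, (if r + (k : ZMod m) - 1 = 0 then x (Fin.last (m + 1)) else 0)
      = x (Fin.last (m + 1)) := by
    have : ∀ r : ZMod m, r + (k : ZMod m) - 1 = 0 ↔ r = 1 - k := fun r =>
      ⟨fun h => by linear_combination h, fun h => by linear_combination h⟩
    simp [this]
  have e2 : ∑ r : ZMod m, x ⟨(r + (k : ZMod m) - 1).val + 1, by have := ZMod.val_lt (r + (k : ZMod m) - 1); omega⟩
      = ∑ i : Fin m, x (Fin.succ (Fin.castSucc i)) := by
    refine Finset.sum_bij' (fun r _ => (⟨(r + (k : ZMod m) - 1).val, ZMod.val_lt _⟩ : Fin m))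
      (fun i _ => ((i : ℕ) : ZMod m) - k + 1) (by simp) (by simp) ?_ ?_ ?_
    · intro r _
      simp only [ZMod.natCast_zmod_val]
      ring
    · intro i _
      ext
      have e : ((i : ℕ) : ZMod m) - k + 1 + k - 1 = ((i : ℕ) : ZMod m) := by ring
      simp only [e]
      exact ZMod.val_natCast_of_lt i.2
    · intro r _
      rfl
  rw [e1, e2, Fin.succ_last]
  ring

theorem S_nonneg (k : ℕ) {x : Fin (m + 2) → ℝ} (hx : ∀ i, 0 ≤ x i) (r : ZMod m) : 0 ≤ S k x r := by
  unfold S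
  have := hx ⟨(r + (k : ZMod m) - 1).val + 1, by have := ZMod.val_lt (r + (k : ZMod m) - 1); omega⟩
  have := hx (Fin.last (m + 1))
  split_ifs <;> linarith

/-- The height coordinate. -/
def ht (k : ℕ) (x : Fin (m + 2) → ℝ) : ℝ := hk (S k x) k + x 1

theorem ht_le (k : ℕ) (x : Fin (m + 2) → ℝ) :
    ht k x + x (Fin.last (m + 1)) = hk (S k x) (k + 1) := by
  rw [hk_succ, S_one, ht]; ring

/-- Reconstruction of a point from its coordinates. -/
theorem recon (k : ℕ) (s : ZMod m → ℝ) (h : ℝ) (hs : ∀ r, 0 ≤ s r) (hσ : ∑ r, s r ≤ 1)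
    (h1 : hk s k ≤ h) (h2 : h ≤ hk s (k + 1)) :
    ∃ t : TopSimplex (m + 1), S k t.1 = s ∧ ht k t.1 = h := by
  have hm : 1 ≤ m := NeZero.one_le
  let x : Fin (m + 2) → ℝ := fun i =>
    if (i : ℕ) = 0 then 1 - ∑ r, s r else if (i : ℕ) = 1 then h - hk s k else
      if (i : ℕ) = m + 1 then hk s (k + 1) - h else s ((i : ℕ) - k)
  have x0 : x 0 = 1 - ∑ r, s r := by simp [x]
  have x1 : x 1 = h - hk s k := by simp [x]
  have xl : x (Fin.last (m + 1)) = hk s (k + 1) - h := by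
    simp only [x, Fin.val_last]
    rw [if_neg (by omega), if_neg (by omega)]
    simp
  have hS : S k x = s := by
    funext r
    obtain ⟨i, hi1, hi2, rfl⟩ := cover k r
    by_cases hi : i = 1
    · subst hi
      simp only [Nat.cast_one]
      rw [S_one, x1, xl, hk_succ]; ring
    · rw [S_apply k x i hi1 hi2, if_neg hi, add_zero]
      simp only [x]
      rw [if_neg (by omega), if_neg (by omega), if_neg (by omega)]
  have hsum : ∑ i, x i = 1 := by
    have := S_sum k x
    rw [hS, x0] at this
    linarith
  refine ⟨⟨x, fun i => ?_, hsum⟩, hS, ?_⟩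
  · simp only [x]
    split_ifs
    · linarith
    · linarith
    · linarith
    · exact hs _
  · simp only [ht, hS, x1]; ring

theorem pt_ext (k : ℕ) (t t' : TopSimplex (m + 1)) (hS : S k t.1 = S k t'.1)
    (hh : ht k t.1 = ht k t'.1) : t = t' := by
  have x1 : t.1 1 = t'.1 1 := by
    simp only [ht, hS] at hh; linarith
  have xl : t.1 (Fin.last (m + 1)) = t'.1 (Fin.last (m + 1)) := by
    have := S_one k t.1
    rw [hS, S_one] at this; linarith
  have x0 : t.1 0 = t'.1 0 := by
    have h1 := S_sum k t.1
    have h2 := S_sum k t'.1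
    rw [t.2.2] at h1
    rw [t'.2.2, ← hS] at h2
    linarith
  apply Subtype.ext
  funext i
  by_cases i0 : (i : ℕ) = 0
  · rw [show i = 0 from Fin.ext i0, x0]
  by_cases il : (i : ℕ) = m + 1
  · rw [show i = Fin.last (m + 1) from Fin.ext il, xl]
  have h1 := S_apply k t.1 i (by omega) (by omega)
  have h2 := S_apply k t'.1 i (by omega) (by omega)
  rw [← hS, h1, xl] at h2
  simpa using h2

theorem glue_of_eq (k : ℕ) (t t' : TopSimplex (m + 1)) (hS : S k t.1 = S (k + 1) t'.1)
    (hh : ht k t.1 = ht (k + 1) t'.1) : GluePt (m + 1) t t' := by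
  have hm : 1 ≤ m := NeZero.one_le
  have e1 := ht_le k t.1
  have e2 : ht (k + 1) t'.1 = hk (S (k + 1) t'.1) (k + 1) + t'.1 1 := rfl
  rw [← hS] at e2
  have p1 := t.2.1 (Fin.last (m + 1))
  have p2 := t'.2.1 1
  have xl : t.1 (Fin.last (m + 1)) = 0 := by linarith
  have y1 : t'.1 1 = 0 := by linarith
  refine ⟨xl, y1, ?_, ?_⟩
  · have h1 := S_sum k t.1
    have h2 := S_sum (k + 1) t'.1
    rw [t.2.2] at h1
    rw [t'.2.2, ← hS] at h2
    linarith
  · intro i hi1 hi2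
    have hi2' : (i : ℕ) ≤ m := by omega
    have h1 := S_apply k t.1 i hi1 hi2'
    rw [xl] at h1
    have hv : ((i + 1 : Fin (m + 1 + 1)) : ℕ) = i + 1 := by
      rw [Fin.val_add_one_of_lt]
      rw [Fin.lt_def]; simp; omega
    by_cases him : (i : ℕ) = m
    · have h2 := S_one (k + 1) t'.1
      have hi' : i + 1 = Fin.last (m + 1) := Fin.ext (by rw [hv, him]; rfl)
      have : (1 - ((k + 1 : ℕ) : ZMod m)) = ((i : ℕ) : ZMod m) - k := by
        rw [him]; push_cast; simp
      rw [this, ← hS, h1, y1] at h2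
      rw [hi']
      simpa using h2.symm
    · have h2 := S_apply (k + 1) t'.1 (i + 1) (by omega) (by omega)
      have : (((i : ℕ) + 1 : ℕ) : ZMod m) - ((k + 1 : ℕ) : ZMod m) = ((i : ℕ) : ZMod m) - k := by
        push_cast; ring
      rw [this, ← hS, h1, if_neg (by omega : ¬ ((i : ℕ) + 1 = 1))] at h2
      have hi' : i + 1 = ⟨(i : ℕ) + 1, by omega⟩ := Fin.ext hv
      rw [hi']
      simpa using h2.symm

theorem eq_of_glue (k : ℕ) (t t' : TopSimplex (m + 1)) (hg : GluePt (m + 1) t t') :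
    S k t.1 = S (k + 1) t'.1 ∧ ht k t.1 = ht (k + 1) t'.1 := by
  have hm : 1 ≤ m := NeZero.one_le
  obtain ⟨xl, y1, y0, hy⟩ := hg
  have hS : S k t.1 = S (k + 1) t'.1 := by
    funext r
    obtain ⟨i, hi1, hi2, rfl⟩ := cover k r
    have h1 := S_apply k t.1 i hi1 hi2
    rw [xl] at h1
    have hy := hy ⟨i, by omega⟩ hi1 (by simpa using hi2)
    have hv : (((⟨i, by omega⟩ : Fin (m + 1 + 1)) + 1 : Fin (m + 1 + 1)) : ℕ) = i + 1 := by
      rw [Fin.val_add_one_of_lt]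
      rw [Fin.lt_def]; simp; omega
    by_cases him : i = m
    · have h2 := S_one (k + 1) t'.1
      have hi' : (⟨i, by omega⟩ : Fin (m + 1 + 1)) + 1 = Fin.last (m + 1) :=
        Fin.ext (by rw [hv, him]; rfl)
      have : (1 - ((k + 1 : ℕ) : ZMod m)) = (i : ZMod m) - k := by
        rw [him]; push_cast; simp
      rw [this] at h2
      rw [h1, h2, ← hi', hy, y1]
      simp
    · have h2 := S_apply (k + 1) t'.1 (i + 1) (by omega) (by omega)
      have : ((i + 1 : ℕ) : ZMod m) - ((k + 1 : ℕ) : ZMod m) = (i : ZMod m) - k := by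
        push_cast; ring
      rw [this, if_neg (by omega : ¬ (i + 1 = 1))] at h2
      have hi' : (⟨i, by omega⟩ : Fin (m + 1 + 1)) + 1 = ⟨i + 1, by omega⟩ := Fin.ext hv
      rw [h1, h2, ← hi', hy]
      simp
  refine ⟨hS, ?_⟩
  have e1 := ht_le k t.1
  have e2 : ht (k + 1) t'.1 = hk (S (k + 1) t'.1) (k + 1) + t'.1 1 := rfl
  rw [← hS] at e2
  linarith

theorem ht_ge (k : ℕ) (t : TopSimplex (m + 1)) : hk (S k t.1) k ≤ ht k t.1 := by
  have := t.2.1 1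
  unfold ht; linarith

theorem ht_le' (k : ℕ) (t : TopSimplex (m + 1)) : ht k t.1 ≤ hk (S k t.1) (k + 1) := by
  have := t.2.1 (Fin.last (m + 1))
  have := ht_le k t.1
  linarith

theorem sum_le (k : ℕ) (t : TopSimplex (m + 1)) : ∑ r, S k t.1 r ≤ 1 := by
  rw [S_sum, t.2.2]; linarith [t.2.1 0]

theorem mk_eq_aux (d : ℕ) : ∀ (k : ℕ) (hk1 : k + d + 1 < m + 2) (t t' : TopSimplex (m + 1)),
    S k t.1 = S (k + d + 1) t'.1 → ht k t.1 = ht (k + d + 1) t'.1 →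
    Quot.mk (GlueRel (m + 1)) (⟨k, by omega⟩, t) =
      Quot.mk (GlueRel (m + 1)) (⟨k + d + 1, hk1⟩, t') := by
  induction d with
  | zero =>
    intro k hk1 t t' hS hh
    exact Quot.sound (Or.inl ⟨rfl, glue_of_eq k t t' hS hh⟩)
  | succ d ih =>
    intro k hk1 t t' hS hh
    have a1 := ht_le' k t
    have a2 := ht_ge (k + (d + 1) + 1) t'
    rw [← hS, ← hh] at a2
    have hs := S_nonneg k t.2.1
    have a3 := hk_mono hs (show k + 1 ≤ k + (d + 1) + 1 by omega)
    have a4 := hk_mono hs (show k + 1 ≤ k + 1 + 1 by omega)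
    obtain ⟨u, hu1, hu2⟩ := recon (k + 1) (S k t.1) (ht k t.1) hs (sum_le k t)
      (by linarith) (by linarith)
    have e : k + (d + 1) + 1 = k + 1 + d + 1 := by omega
    have b1 : Quot.mk (GlueRel (m + 1)) (⟨k, by omega⟩, t) =
        Quot.mk (GlueRel (m + 1)) (⟨k + 1, by omega⟩, u) :=
      Quot.sound (Or.inl ⟨rfl, glue_of_eq k t u hu1.symm hu2.symm⟩)
    have b2 := ih (k + 1) (by omega) u t' (by rw [hu1, hS, e]) (by rw [hu2, hh, e])
    rw [b1, b2]
    congr 2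
    exact Fin.ext e.symm

theorem mk_eq (p q : Fin (m + 2) × TopSimplex (m + 1)) (hS : S p.1 p.2.1 = S q.1 q.2.1)
    (hh : ht p.1 p.2.1 = ht q.1 q.2.1) :
    Quot.mk (GlueRel (m + 1)) p = Quot.mk (GlueRel (m + 1)) q := by
  obtain ⟨⟨k, hk⟩, t⟩ := p
  obtain ⟨⟨k', hk'⟩, t'⟩ := q
  simp only at hS hh
  rcases lt_trichotomy k k' with h | h | h
  · obtain ⟨d, rfl⟩ := Nat.exists_eq_add_of_lt h
    exact mk_eq_aux d k hk' t t' hS hh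
  · subst h
    rw [pt_ext k t t' hS hh]
  · obtain ⟨d, rfl⟩ := Nat.exists_eq_add_of_lt h
    exact (mk_eq_aux d k' hk t' t hS.symm hh.symm).symm

theorem eq_of_rel (p q : Fin (m + 2) × TopSimplex (m + 1)) (h : GlueRel (m + 1) p q) :
    S p.1 p.2.1 = S q.1 q.2.1 ∧ ht p.1 p.2.1 = ht q.1 q.2.1 := by
  rcases h with ⟨h, hg⟩ | ⟨h, hg⟩
  · rw [← h]; exact eq_of_glue _ _ _ hg
  · rw [← h]
    obtain ⟨a, b⟩ := eq_of_glue (q.1 : ℕ) _ _ hg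
    exact ⟨a.symm, b.symm⟩

theorem exists_level (s : ZMod m → ℝ) (h : ℝ) (h0 : 0 ≤ h) (n : ℕ) (hn : h ≤ hk s (n + 1)) :
    ∃ k, k < n + 1 ∧ hk s k ≤ h ∧ h ≤ hk s (k + 1) := by
  induction n with
  | zero => exact ⟨0, by omega, by simpa [hk] using h0, hn⟩
  | succ n ih =>
    by_cases hc : h ≤ hk s (n + 1)
    · obtain ⟨k, h1, h2⟩ := ih hc
      exact ⟨k, by omega, h2⟩
    · exact ⟨n + 1, by omega, (not_le.mp hc).le, hn⟩

theorem surj_Q (s : ZMod m → ℝ) (h : ℝ) (hs : ∀ r, 0 ≤ s r) (hσ : ∑ r, s r ≤ 1)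
    (h0 : 0 ≤ h) (h1 : h ≤ hk s (m + 2)) :
    ∃ p : Fin (m + 2) × TopSimplex (m + 1), S p.1 p.2.1 = s ∧ ht p.1 p.2.1 = h := by
  obtain ⟨k, k1, k2, k3⟩ := exists_level s h h0 (m + 1) h1
  obtain ⟨t, ht⟩ := recon k s h hs hσ k2 k3
  exact ⟨(⟨k, k1⟩, t), ht⟩

theorem bd_iff (s : ZMod m → ℝ) (h : ℝ) (hs : ∀ r, 0 ≤ s r) (hσ : ∑ r, s r ≤ 1)
    (h0 : 0 ≤ h) (h1 : h ≤ hk s (m + 2)) :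
    (∃ p : Fin (m + 2) × TopSimplex (m + 1), (∃ j : Fin (m + 2), p.2.1 j = 0 ∧
      ¬(j = Fin.last (m + 1) ∧ p.1 ≠ Fin.last (m + 1)) ∧ ¬(j = 1 ∧ p.1 ≠ 0)) ∧
      S p.1 p.2.1 = s ∧ ht p.1 p.2.1 = h) ↔
    (∑ r, s r = 1 ∨ (∃ r, s r = 0) ∨ h = 0 ∨ h = hk s (m + 2)) := by
  have hm : 1 ≤ m := NeZero.one_le
  have hl1 : (Fin.last (m + 1) : Fin (m + 2)) ≠ 1 := by
    intro h; have := congrArg Fin.val h; simp at this; omega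
  constructor
  · rintro ⟨⟨k, t⟩, ⟨j, hj, hj1, hj2⟩, rfl, rfl⟩
    simp only at hj hj1 hj2 ⊢
    by_cases j0 : j = 0
    · left; subst j0; rw [S_sum, t.2.2, hj]; ring
    by_cases j1 : j = 1
    · have : k = 0 := by tauto
      subst this
      subst j1
      right; right; left
      simp [ht, hj, hk]
    by_cases jl : j = Fin.last (m + 1)
    · have : k = Fin.last (m + 1) := by tauto
      subst this
      subst jl
      right; right; right
      have := ht_le ((Fin.last (m + 1) : Fin (m + 2)) : ℕ) t.1
      rw [hj] at this
      simpa using this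
    · right; left
      have a0 : (j : ℕ) ≠ 0 := fun h => j0 (Fin.ext h)
      have a1 : (j : ℕ) ≠ 1 := fun h => j1 (Fin.ext (by simpa using h))
      have al : (j : ℕ) ≠ m + 1 := fun h => jl (Fin.ext h)
      refine ⟨((j : ℕ) : ZMod m) - (k : ℕ), ?_⟩
      rw [S_apply _ _ _ (by omega) (by omega), if_neg a1]
      simpa using hj
  · intro hD
    obtain ⟨⟨k, t⟩, rfl, rfl⟩ := surj_Q s h hs hσ h0 h1
    simp only at *
    rcases hD with hD | ⟨r, hr⟩ | hD | hD
    · refine ⟨(k, t), ⟨0, ?_, ?_, ?_⟩, rfl, rfl⟩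
      · rw [S_sum, t.2.2] at hD; simp only; linarith
      · rintro ⟨h, _⟩; have := congrArg Fin.val h; simp at this
      · rintro ⟨h, _⟩; have := congrArg Fin.val h; simp at this
    · obtain ⟨i, hi1, hi2, rfl⟩ := cover (k : ℕ) r
      have hSa := S_apply (k : ℕ) t.1 i hi1 hi2
      rw [hr] at hSa
      by_cases hi : i = 1
      · subst hi
        have p1 := t.2.1 1
        have pl := t.2.1 (Fin.last (m + 1))
        have hS1 := S_one (k : ℕ) t.1
        simp only [Nat.cast_one] at hr
        rw [hr] at hS1
        have x1 : t.1 1 = 0 := by linarith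
        have xl : t.1 (Fin.last (m + 1)) = 0 := by linarith
        by_cases k0 : k = 0
        · refine ⟨(k, t), ⟨1, x1, ?_, ?_⟩, rfl, rfl⟩
          · rintro ⟨h, _⟩; exact hl1 h.symm
          · simp [k0]
        by_cases kl : k = Fin.last (m + 1)
        · refine ⟨(k, t), ⟨Fin.last (m + 1), xl, ?_, ?_⟩, rfl, rfl⟩
          · simp [kl]
          · simp [hl1]
        have kl' : (k : ℕ) ≠ m + 1 := fun h => kl (Fin.ext h)
        have k0' : (k : ℕ) ≠ 0 := fun h => k0 (Fin.ext h)
        have hle := ht_le (k : ℕ) t.1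
        rw [xl] at hle
        have a4 := hk_mono hs (show (k : ℕ) + 1 ≤ k + 1 + 1 by omega)
        obtain ⟨u, hu1, hu2⟩ := recon ((k : ℕ) + 1) (S k t.1) (ht k t.1) hs hσ
          (by linarith) (by linarith)
        refine ⟨(⟨(k : ℕ) + 1, by omega⟩, u), ⟨⟨2, by omega⟩, ?_, ?_, ?_⟩, hu1, hu2⟩
        · obtain ⟨-, -, -, hg⟩ := glue_of_eq (k : ℕ) t u hu1.symm hu2.symm
          have := hg 1 (by simp) (by simpa using hm)
          rw [x1] at this
          have h2 := Fin.val_add_one_of_lt (n := m + 1) (i := (1 : Fin (m + 2)))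
            (by rw [Fin.lt_def]; simp; omega)
          have h3 : (1 + 1 : Fin (m + 2)) = ⟨2, by omega⟩ := Fin.ext (by rw [h2]; simp)
          rw [h3] at this
          exact this
        · rintro ⟨h, h'⟩
          apply h'
          have := congrArg Fin.val h
          simp at this
          apply Fin.ext
          simp
          omega
        · rintro ⟨h, -⟩
          have := congrArg Fin.val h
          simp at this
      · rw [if_neg hi, add_zero] at hSa
        refine ⟨(k, t), ⟨⟨i, by omega⟩, hSa.symm, ?_, ?_⟩, rfl, rfl⟩
        · rintro ⟨h, _⟩; have := congrArg Fin.val h; simp at this; omega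
        · rintro ⟨h, _⟩; have := congrArg Fin.val h; simp at this; omega
    · obtain ⟨u, hu1, hu2⟩ := recon 0 (S k t.1) (ht k t.1) hs hσ
        (by simpa [hk] using h0) (by rw [hD]; simpa [hk] using hs _)
      refine ⟨(0, u), ⟨1, ?_, ?_, ?_⟩, hu1, hu2⟩
      · rw [hD] at hu2; simpa [ht, hk] using hu2
      · rintro ⟨h, _⟩; exact hl1 h.symm
      · simp
    · obtain ⟨u, hu1, hu2⟩ := recon (m + 1) (S k t.1) (ht k t.1) hs hσ
        (by rw [hD]; exact hk_mono hs (by omega)) hD.le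
      refine ⟨(Fin.last (m + 1), u), ⟨Fin.last (m + 1), ?_, ?_, ?_⟩, hu1, hu2⟩
      · have := ht_le (m + 1) u.1
        rw [hu1, hu2] at this
        simp only; linarith
      · simp
      · simp [hl1]

theorem edge_iff (s : ZMod m → ℝ) (h : ℝ) (hs : ∀ r, 0 ≤ s r) (hσ : ∑ r, s r ≤ 1)
    (h0 : 0 ≤ h) (h1 : h ≤ hk s (m + 2)) :
    (∃ p : Fin (m + 2) × TopSimplex (m + 1), (p.1 ≠ 0 ∧ p.2.1 0 = 0) ∧
      S p.1 p.2.1 = s ∧ ht p.1 p.2.1 = h) ↔ (∑ r, s r = 1 ∧ s 1 ≤ h) := by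
  have e1 : ∀ s : ZMod m → ℝ, hk s 1 = s 1 := fun s => by simp [hk]
  constructor
  · rintro ⟨⟨k, t⟩, ⟨k0, hj⟩, rfl, rfl⟩
    simp only at *
    have k0' : (k : ℕ) ≠ 0 := fun h => k0 (Fin.ext h)
    constructor
    · rw [S_sum, t.2.2, hj]; ring
    · have := hk_mono hs (show 1 ≤ (k : ℕ) by omega)
      rw [e1] at this
      exact this.trans (ht_ge _ _)
  · rintro ⟨hD, hle⟩
    obtain ⟨⟨k, t⟩, rfl, rfl⟩ := surj_Q s h hs hσ h0 h1
    simp only at *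
    by_cases k0 : k = 0
    · subst k0
      have := ht_le' 0 t
      obtain ⟨u, hu1, hu2⟩ := recon 1 (S ((0 : Fin (m + 2)) : ℕ) t.1) (ht ((0 : Fin (m + 2)) : ℕ) t.1) hs hσ
        (by rw [e1]; exact hle) (this.trans (hk_mono hs (by omega)))
      refine ⟨(1, u), ⟨by simp, ?_⟩, by simpa using hu1, by simpa using hu2⟩
      have := S_sum 1 u.1
      rw [hu1, hD, u.2.2] at this
      simp only; linarith
    · refine ⟨(k, t), ⟨k0, ?_⟩, rfl, rfl⟩
      rw [S_sum, t.2.2] at hD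
      simp only; linarith

end FP
namespace FP
open Finset
set_option linter.unusedSectionVars false

variable {m : ℕ} [NeZero m]

/-! ### Bending the prism -/

def QP (s : ZMod m → ℝ) (h : ℝ) : Prop :=
  (∀ r, 0 ≤ s r) ∧ ∑ r, s r ≤ 1 ∧ 0 ≤ h ∧ h ≤ hk s (m + 2)

def KP (s : ZMod m → ℝ) (h : ℝ) : Prop :=
  (∀ r, 0 ≤ s r) ∧ ∑ r, s r ≤ 1 ∧ 0 ≤ h ∧ h ≤ hk s (m + 2) ∧ ∑ r, s r + s 1 - h ≤ 1

def bend (s : ZMod m → ℝ) (h : ℝ) : ZMod m → ℝ :=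
  fun r => s r - if r = 1 then max (s 1 - h) 0 / 2 else 0

def unbend (s : ZMod m → ℝ) (h : ℝ) : ZMod m → ℝ :=
  fun r => s r + if r = 1 then max (s 1 - h) 0 else 0

theorem bend_one (s : ZMod m → ℝ) (h : ℝ) : bend s h 1 = s 1 - max (s 1 - h) 0 / 2 := by
  simp [bend]

theorem bend_ne (s : ZMod m → ℝ) (h : ℝ) {r : ZMod m} (hr : r ≠ 1) : bend s h r = s r := by
  simp [bend, hr]

theorem unbend_one (s : ZMod m → ℝ) (h : ℝ) : unbend s h 1 = s 1 + max (s 1 - h) 0 := by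
  simp [unbend]

theorem unbend_ne (s : ZMod m → ℝ) (h : ℝ) {r : ZMod m} (hr : r ≠ 1) : unbend s h r = s r := by
  simp [unbend, hr]

theorem bend_sum (s : ZMod m → ℝ) (h : ℝ) :
    ∑ r, bend s h r = ∑ r, s r - max (s 1 - h) 0 / 2 := by
  simp [bend, sum_sub_distrib]

theorem unbend_sum (s : ZMod m → ℝ) (h : ℝ) :
    ∑ r, unbend s h r = ∑ r, s r + max (s 1 - h) 0 := by
  simp [unbend, sum_add_distrib]

theorem bend_of_le {s : ZMod m → ℝ} {h : ℝ} (hle : s 1 ≤ h) : bend s h = s := by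
  funext r
  simp [bend, max_eq_right (sub_nonpos.mpr hle)]

theorem unbend_of_le {s : ZMod m → ℝ} {h : ℝ} (hle : s 1 ≤ h) : unbend s h = s := by
  funext r
  simp [unbend, max_eq_right (sub_nonpos.mpr hle)]

theorem unbend_bend (s : ZMod m → ℝ) (h : ℝ) : unbend (bend s h) h = s := by
  rcases le_or_gt (s 1) h with hle | hlt
  · rw [bend_of_le hle, unbend_of_le hle]
  · funext r
    by_cases hr : r = 1
    · subst hr
      rw [unbend_one, bend_one, max_eq_left (by linarith : 0 ≤ s 1 - h), max_eq_left (by linarith)]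
      ring
    · rw [unbend_ne _ _ hr, bend_ne _ _ hr]

theorem bend_unbend (s : ZMod m → ℝ) (h : ℝ) : bend (unbend s h) h = s := by
  rcases le_or_gt (s 1) h with hle | hlt
  · rw [unbend_of_le hle, bend_of_le hle]
  · funext r
    by_cases hr : r = 1
    · subst hr
      rw [bend_one, unbend_one, max_eq_left (by linarith : 0 ≤ s 1 - h), max_eq_left (by linarith)]
      ring
    · rw [bend_ne _ _ hr, unbend_ne _ _ hr]

theorem le_hk {s : ZMod m → ℝ} (hs : ∀ r, 0 ≤ s r) : s 1 ≤ hk s (m + 2) := by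
  have h := hk_mono hs (show 1 ≤ m + 2 by omega)
  have e : hk s 1 = s 1 := by simp [hk]
  linarith

theorem KP_bend {s : ZMod m → ℝ} {h : ℝ} (H : QP s h) : KP (bend s h) h := by
  obtain ⟨h1, h2, h3, h4⟩ := H
  rcases le_or_gt (s 1) h with hle | hlt
  · rw [bend_of_le hle]
    exact ⟨h1, h2, h3, h4, by linarith⟩
  · have e1 := bend_one s h
    have e2 := bend_sum s h
    rw [max_eq_left (by linarith : 0 ≤ s 1 - h)] at e1 e2
    have hp : ∀ r, 0 ≤ bend s h r := by
      intro r
      by_cases hr : r = 1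
      · subst hr; linarith
      · rw [bend_ne _ _ hr]; exact h1 r
    have := le_hk hp
    exact ⟨hp, by linarith, h3, by linarith, by linarith⟩

theorem QP_unbend {s : ZMod m → ℝ} {h : ℝ} (H : KP s h) : QP (unbend s h) h := by
  obtain ⟨h1, h2, h3, h4, h5⟩ := H
  rcases le_or_gt (s 1) h with hle | hlt
  · rw [unbend_of_le hle]
    exact ⟨h1, h2, h3, h4⟩
  · have e1 := unbend_one s h
    have e2 := unbend_sum s h
    rw [max_eq_left (by linarith : 0 ≤ s 1 - h)] at e1 e2
    have hp : ∀ r, 0 ≤ unbend s h r := by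
      intro r
      by_cases hr : r = 1
      · subst hr; linarith [h1 1]
      · rw [unbend_ne _ _ hr]; exact h1 r
    have := le_hk hp
    exact ⟨hp, by linarith, h3, by linarith⟩

theorem bd_bend {s : ZMod m → ℝ} {h : ℝ} (H : QP s h) :
    (∑ r, s r = 1 ∨ (∃ r, s r = 0) ∨ h = 0 ∨ h = hk s (m + 2)) ↔
    (∑ r, bend s h r = 1 ∨ (∃ r, bend s h r = 0) ∨ h = 0 ∨ h = hk (bend s h) (m + 2) ∨
      ∑ r, bend s h r + bend s h 1 - h = 1) := by
  have K := KP_bend H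
  obtain ⟨h1, h2, h3, h4⟩ := H
  rcases le_or_gt (s 1) h with hle | hlt
  · rw [bend_of_le hle]
    constructor
    · tauto
    · rintro (h | h | h | h | h)
      · exact Or.inl h
      · exact Or.inr (Or.inl h)
      · exact Or.inr (Or.inr (Or.inl h))
      · exact Or.inr (Or.inr (Or.inr h))
      · left; linarith
  · have e1 := bend_one s h
    have e2 := bend_sum s h
    rw [max_eq_left (by linarith : 0 ≤ s 1 - h)] at e1 e2
    have l1 := le_hk h1
    have l2 := le_hk K.1
    constructor
    · rintro (h | ⟨r, h⟩ | h | h)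
      · right; right; right; right; linarith
      · right; left
        refine ⟨r, ?_⟩
        by_cases hr : r = 1
        · subst hr; linarith
        · rw [bend_ne _ _ hr]; exact h
      · exact Or.inr (Or.inr (Or.inl h))
      · linarith
    · rintro (h | ⟨r, h⟩ | h | h | h)
      · linarith
      · right; left
        refine ⟨r, ?_⟩
        by_cases hr : r = 1
        · subst hr; linarith
        · rwa [bend_ne _ _ hr] at h
      · exact Or.inr (Or.inr (Or.inl h))
      · linarith
      · left; linarith

theorem edge_bend {s : ZMod m → ℝ} {h : ℝ} (H : QP s h) :
    (∑ r, s r = 1 ∧ s 1 ≤ h) ↔ ∑ r, bend s h r = 1 := by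
  obtain ⟨h1, h2, h3, h4⟩ := H
  rcases le_or_gt (s 1) h with hle | hlt
  · rw [bend_of_le hle]
    tauto
  · have e2 := bend_sum s h
    rw [max_eq_left (by linarith : 0 ≤ s 1 - h)] at e2
    constructor
    · rintro ⟨a, b⟩; linarith
    · intro a; linarith

/-! ### The gauge -/

def pK (w : (ZMod m → ℝ) × ℝ) : ℝ :=
  max (max (univ.sup' univ_nonempty (fun r => -(m : ℝ) * w.1 r)) (-((m : ℝ) / 2) * w.2))
    (max (w.2 - hk w.1 (m + 2)) ((m : ℝ) * (∑ r, w.1 r + w.1 1 - w.2)))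

theorem pK_le (w : (ZMod m → ℝ) × ℝ) (a : ℝ) : pK w ≤ a ↔
    ((∀ r, -(m : ℝ) * w.1 r ≤ a) ∧ -((m : ℝ) / 2) * w.2 ≤ a) ∧
      (w.2 - hk w.1 (m + 2) ≤ a ∧ (m : ℝ) * (∑ r, w.1 r + w.1 1 - w.2) ≤ a) := by
  simp only [pK, max_le_iff, sup'_le_iff, mem_univ, true_imp_iff]

theorem le_pK (w : (ZMod m → ℝ) × ℝ) :
    ((∀ r, -(m : ℝ) * w.1 r ≤ pK w) ∧ -((m : ℝ) / 2) * w.2 ≤ pK w) ∧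
      (w.2 - hk w.1 (m + 2) ≤ pK w ∧ (m : ℝ) * (∑ r, w.1 r + w.1 1 - w.2) ≤ pK w) :=
  (pK_le w _).mp le_rfl

theorem pK_attained (w : (ZMod m → ℝ) × ℝ) :
    (∃ r, pK w = -(m : ℝ) * w.1 r) ∨ pK w = -((m : ℝ) / 2) * w.2 ∨
      pK w = w.2 - hk w.1 (m + 2) ∨ pK w = (m : ℝ) * (∑ r, w.1 r + w.1 1 - w.2) := by
  obtain ⟨r, -, hr⟩ := exists_mem_eq_sup' (univ_nonempty (α := ZMod m))
    (fun r => -(m : ℝ) * w.1 r)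
  unfold pK
  rw [hr]
  rcases max_choice (max (-(m : ℝ) * w.1 r) (-((m : ℝ) / 2) * w.2))
    (max (w.2 - hk w.1 (m + 2)) ((m : ℝ) * (∑ r, w.1 r + w.1 1 - w.2))) with h | h <;> rw [h]
  · rcases max_choice (-(m : ℝ) * w.1 r) (-((m : ℝ) / 2) * w.2) with h | h <;> rw [h]
    · exact Or.inl ⟨r, rfl⟩
    · simp
  · rcases max_choice (w.2 - hk w.1 (m + 2)) ((m : ℝ) * (∑ r, w.1 r + w.1 1 - w.2)) with h | h <;>
      rw [h] <;> simp

theorem hk_smul (c : ℝ) (s : ZMod m → ℝ) (k : ℕ) : hk (c • s) k = c * hk s k := by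
  simp [hk, mul_sum]

theorem pK_smul_le (c : ℝ) (hc : 0 ≤ c) (w : (ZMod m → ℝ) × ℝ) : pK (c • w) ≤ c * pK w := by
  rw [pK_le]
  obtain ⟨⟨h1, h2⟩, h3, h4⟩ := le_pK w
  simp only [Prod.smul_fst, Prod.smul_snd, hk_smul, Pi.smul_apply, smul_eq_mul, ← mul_sum]
  refine ⟨⟨fun r => ?_, ?_⟩, ?_, ?_⟩
  · have := mul_le_mul_of_nonneg_left (h1 r) hc; linarith
  · have := mul_le_mul_of_nonneg_left h2 hc; linarith
  · have := mul_le_mul_of_nonneg_left h3 hc; linarith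
  · have := mul_le_mul_of_nonneg_left h4 hc; linarith

theorem pK_smul (c : ℝ) (hc : 0 < c) (w : (ZMod m → ℝ) × ℝ) : pK (c • w) = c * pK w := by
  apply le_antisymm (pK_smul_le c hc.le w)
  have h := pK_smul_le c⁻¹ (inv_nonneg.mpr hc.le) (c • w)
  rw [inv_smul_smul₀ hc.ne'] at h
  have := mul_le_mul_of_nonneg_left h hc.le
  rwa [mul_inv_cancel_left₀ hc.ne'] at this

theorem pK_zero : pK (0 : (ZMod m → ℝ) × ℝ) = 0 := by
  apply le_antisymm
  · rw [pK_le]; simp [hk]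
  · have := (le_pK (0 : (ZMod m → ℝ) × ℝ)).1.2
    simpa using this

theorem pK_pos (w : (ZMod m → ℝ) × ℝ) (hw : ∑ r, w.1 r ≤ 0) (h0 : w ≠ 0) : 0 < pK w := by
  have hm : (0 : ℝ) < m := by exact_mod_cast Nat.pos_of_ne_zero (NeZero.ne m)
  by_contra hc
  rw [not_lt, pK_le] at hc
  obtain ⟨⟨h1, h2⟩, h3, h4⟩ := hc
  apply h0
  have p : ∀ r, 0 ≤ w.1 r := fun r => by
    have := h1 r
    by_contra hn
    nlinarith
  have z : w.1 = 0 := by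
    have e : ∑ r, w.1 r = 0 := le_antisymm hw (sum_nonneg fun r _ => p r)
    funext r
    exact (sum_eq_zero_iff_of_nonneg (fun r _ => p r)).mp e r (mem_univ r)
  have z2 : hk w.1 (m + 2) = 0 := by rw [z]; simp [hk]
  have : w.2 = 0 := by
    apply le_antisymm
    · linarith
    · by_contra hn
      nlinarith
  exact Prod.ext z this

theorem pK_continuous : Continuous (pK : (ZMod m → ℝ) × ℝ → ℝ) := by
  unfold pK
  have h1 : Continuous fun w : (ZMod m → ℝ) × ℝ =>
      univ.sup' univ_nonempty (fun r => -(m : ℝ) * w.1 r) := by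
    apply Continuous.finset_sup'_apply
    intro r _
    fun_prop
  have h2 : Continuous fun w : (ZMod m → ℝ) × ℝ => hk w.1 (m + 2) := by
    unfold hk; fun_prop
  fun_prop

/-- Translation to the centre of the flat face. -/
def tr (s : ZMod m → ℝ) (h : ℝ) : (ZMod m → ℝ) × ℝ := (fun r => s r - 1 / m, h - 2 / m)

theorem tr_sum (s : ZMod m → ℝ) (h : ℝ) : ∑ r, (tr s h).1 r = ∑ r, s r - 1 := by
  have hm : (m : ℝ) ≠ 0 := by exact_mod_cast (NeZero.ne m)
  simp [tr, sum_sub_distrib, ZMod.card, hm]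

theorem tr_hk (s : ZMod m → ℝ) (h : ℝ) :
    (tr s h).2 - hk (tr s h).1 (m + 2) = h - hk s (m + 2) + 1 := by
  have hm : (m : ℝ) ≠ 0 := by exact_mod_cast (NeZero.ne m)
  simp only [tr, hk, sum_sub_distrib, sum_const, card_range, nsmul_eq_mul]
  push_cast
  field_simp
  ring

theorem tr_vals (s : ZMod m → ℝ) (h : ℝ) :
    (∀ r, -(m : ℝ) * (tr s h).1 r = 1 - m * s r) ∧ -((m : ℝ) / 2) * (tr s h).2 = 1 - m / 2 * h ∧
      (m : ℝ) * (∑ r, (tr s h).1 r + (tr s h).1 1 - (tr s h).2) =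
        1 + m * (∑ r, s r + s 1 - h - 1) := by
  have hm : (m : ℝ) ≠ 0 := by exact_mod_cast (NeZero.ne m)
  rw [tr_sum]
  refine ⟨fun r => ?_, ?_, ?_⟩ <;> simp only [tr] <;> field_simp <;> ring

theorem KP_iff (s : ZMod m → ℝ) (h : ℝ) :
    KP s h ↔ ∑ r, (tr s h).1 r ≤ 0 ∧ pK (tr s h) ≤ 1 := by
  have hm : (0 : ℝ) < m := by exact_mod_cast Nat.pos_of_ne_zero (NeZero.ne m)
  obtain ⟨t1, t2, t3⟩ := tr_vals s h
  rw [pK_le, tr_hk, t2, t3, tr_sum]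
  simp only [t1]
  constructor
  · rintro ⟨h1, h2, h3, h4, h5⟩
    refine ⟨by linarith, ⟨fun r => ?_, ?_⟩, by linarith, ?_⟩
    · nlinarith [h1 r]
    · nlinarith
    · nlinarith
  · rintro ⟨h1, ⟨h2, h3⟩, h4, h5⟩
    refine ⟨fun r => ?_, by linarith, ?_, by linarith, ?_⟩
    · have := h2 r
      by_contra hn
      nlinarith
    · by_contra hn
      nlinarith
    · by_contra hn
      nlinarith

theorem KP_bd {s : ZMod m → ℝ} {h : ℝ} (K : KP s h) :
    (∑ r, s r = 1 ∨ (∃ r, s r = 0) ∨ h = 0 ∨ h = hk s (m + 2) ∨ ∑ r, s r + s 1 - h = 1) ↔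
    (∑ r, (tr s h).1 r = 0 ∨ pK (tr s h) = 1) := by
  have hm : (0 : ℝ) < m := by exact_mod_cast Nat.pos_of_ne_zero (NeZero.ne m)
  have hle := ((KP_iff s h).mp K).2
  obtain ⟨t1, t2, t3⟩ := tr_vals s h
  have t4 := tr_hk s h
  obtain ⟨⟨l1, l2⟩, l3, l4⟩ := le_pK (tr s h)
  have at1 := pK_attained (tr s h)
  rw [t2, t3, t4] at at1
  rw [t2] at l2
  rw [t3] at l4
  rw [t4] at l3
  simp only [t1] at at1 l1
  rw [tr_sum]
  constructor
  · rintro (hh | ⟨r, hh⟩ | hh | hh | hh)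
    · left; linarith
    · right
      have := l1 r
      rw [hh] at this
      linarith
    · right
      have e : (m : ℝ) / 2 * h = 0 := by rw [hh, mul_zero]
      linarith
    · right; linarith
    · right
      rw [hh] at l4
      linarith
  · rintro (hh | hh)
    · left; linarith
    · rw [hh] at at1
      rcases at1 with ⟨r, h1⟩ | h1 | h1 | h1
      · right; left
        refine ⟨r, ?_⟩
        have : (m : ℝ) * s r = 0 := by linarith
        simpa [hm.ne'] using this
      · right; right; left
        have : (m : ℝ) / 2 * h = 0 := by linarith
        simpa [hm.ne'] using this
      · right; right; right; left; linarith
      · right; right; right; right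
        have : (m : ℝ) * (∑ r, s r + s 1 - h - 1) = 0 := by linarith
        rcases mul_eq_zero.mp this with h2 | h2
        · exact absurd h2 hm.ne'
        · linarith

/-! ### Linear coordinates -/

theorem exists_L (m : ℕ) [NeZero m] : ∃ L : ((ZMod m → ℝ) × ℝ) ≃L[ℝ] EuclideanSpace ℝ (Fin (m + 1)),
    ∀ w, L w (Fin.last m) = ∑ r, w.1 r := by
  have hcard : Fintype.card (Fin (m + 1)) = Fintype.card (Option (ZMod m)) := by
    simp [ZMod.card]
  let e0 : Fin (m + 1) ≃ Option (ZMod m) := Fintype.equivOfCardEq hcard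
  let e : Fin (m + 1) ≃ Option (ZMod m) := e0.trans (Equiv.swap (e0 (Fin.last m)) (some 0))
  have he : e (Fin.last m) = some 0 := by simp [e]
  let g : Option (ZMod m) → ((ZMod m → ℝ) × ℝ) →ₗ[ℝ] ℝ := fun o =>
    match o with
    | none => LinearMap.snd ℝ _ _
    | some r => if r = 0 then ∑ r, LinearMap.proj r ∘ₗ LinearMap.fst ℝ (ZMod m → ℝ) ℝ
        else LinearMap.proj r ∘ₗ LinearMap.fst ℝ (ZMod m → ℝ) ℝ
  have g0 : ∀ w, g (some 0) w = ∑ r, w.1 r := by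
    intro w; simp [g]
  have gr : ∀ w r, r ≠ 0 → g (some r) w = w.1 r := by
    intro w r hr; simp [g, hr]
  have gn : ∀ w, g none w = w.2 := by
    intro w; simp [g]
  let A : ((ZMod m → ℝ) × ℝ) →ₗ[ℝ] (Fin (m + 1) → ℝ) := LinearMap.pi fun i => g (e i)
  have hA : ∀ w o, A w (e.symm o) = g o w := by
    intro w o; simp [A]
  have hinj : Function.Injective A := by
    rw [← LinearMap.ker_eq_bot, LinearMap.ker_eq_bot']
    intro w hw
    have hz : ∀ o, g o w = 0 := fun o => by rw [← hA, hw]; rfl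
    have z2 : w.2 = 0 := by rw [← gn]; exact hz none
    have zr : ∀ r, r ≠ 0 → w.1 r = 0 := fun r hr => by rw [← gr w r hr]; exact hz (some r)
    have z0 : w.1 0 = 0 := by
      have := hz (some 0)
      rw [g0, sum_eq_single 0 (fun r _ hr => zr r hr) (by simp)] at this
      exact this
    refine Prod.ext ?_ z2
    funext r
    by_cases hr : r = 0
    · rw [hr, z0]; rfl
    · rw [zr r hr]; rfl
  have hfin : Module.finrank ℝ ((ZMod m → ℝ) × ℝ) = Module.finrank ℝ (Fin (m + 1) → ℝ) := by
    simp [ZMod.card]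
  let A' := LinearEquiv.ofInjectiveOfFinrankEq A hinj hfin
  refine ⟨A'.toContinuousLinearEquiv.trans (EuclideanSpace.equiv (Fin (m + 1)) ℝ).symm, ?_⟩
  intro w
  change A w (Fin.last m) = _
  rw [← g0, ← he, ← hA]
  simp

/-! ### Radial rescaling -/

section radial
variable (L : ((ZMod m → ℝ) × ℝ) ≃L[ℝ] EuclideanSpace ℝ (Fin (m + 1)))

def rad (w : (ZMod m → ℝ) × ℝ) : EuclideanSpace ℝ (Fin (m + 1)) := (pK w / ‖L w‖) • L w

theorem norm_rad (w : (ZMod m → ℝ) × ℝ) (hw : ∑ r, w.1 r ≤ 0) : ‖rad L w‖ = pK w := by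
  by_cases h0 : w = 0
  · subst h0; simp [rad, pK_zero]
  · have hp := pK_pos w hw h0
    have hn : 0 < ‖L w‖ := norm_pos_iff.mpr (by simpa using h0)
    rw [rad, norm_smul, Real.norm_of_nonneg (by positivity)]
    field_simp

theorem rad_continuous : Continuous (rad L) := by
  rw [continuous_iff_continuousAt]
  intro w
  by_cases h0 : w = 0
  · subst h0
    have e : rad L 0 = 0 := by simp [rad]
    rw [ContinuousAt, e]
    have hb : ∀ w, ‖rad L w‖ ≤ |pK w| := by
      intro w
      rw [rad, norm_smul, norm_div, norm_norm, Real.norm_eq_abs]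
      by_cases hz : ‖L w‖ = 0
      · rw [hz]; simp
      · rw [div_mul_cancel₀ _ hz]
    refine squeeze_zero_norm hb ?_
    have : Continuous fun w : (ZMod m → ℝ) × ℝ => |pK w| := pK_continuous.abs
    have h := this.tendsto 0
    simpa [pK_zero] using h
  · have hn : ‖L w‖ ≠ 0 := norm_ne_zero_iff.mpr (by simpa using h0)
    unfold rad
    have := (pK_continuous (m := m)).continuousAt (x := w)
    have hL := L.continuous.continuousAt (x := w)
    exact (this.div hL.norm hn).smul hL

theorem rad_inj (w w' : (ZMod m → ℝ) × ℝ) (hw : ∑ r, w.1 r ≤ 0) (hw' : ∑ r, w'.1 r ≤ 0)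
    (h : rad L w = rad L w') : w = w' := by
  have hp : pK w = pK w' := by rw [← norm_rad L w hw, ← norm_rad L w' hw', h]
  by_cases h0 : w = 0
  · by_contra hne
    have := pK_pos w' hw' (fun h => hne (by rw [h0, h]))
    rw [← hp, h0, pK_zero] at this
    exact lt_irrefl _ this
  have p1 := pK_pos w hw h0
  have h0' : w' ≠ 0 := by
    intro h; rw [hp, h, pK_zero] at p1; exact lt_irrefl _ p1
  have hn : 0 < ‖L w‖ := norm_pos_iff.mpr (by simpa using h0)
  have hn' : 0 < ‖L w'‖ := norm_pos_iff.mpr (by simpa using h0')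
  have hc : w = (‖L w‖ / ‖L w'‖) • w' := by
    apply L.injective
    rw [map_smul]
    have h2 := congrArg (fun x => (‖L w‖ / pK w) • x) h
    simp only [rad, smul_smul] at h2
    rw [← hp] at h2
    have e1 : ‖L w‖ / pK w * (pK w / ‖L w‖) = 1 := by field_simp
    have e2 : ‖L w‖ / pK w * (pK w / ‖L w'‖) = ‖L w‖ / ‖L w'‖ := by field_simp
    rw [e1, e2, one_smul] at h2
    exact h2
  have hcp : 0 < ‖L w‖ / ‖L w'‖ := by positivity
  have h3 := pK_smul _ hcp w'
  rw [← hc, ← hp] at h3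
  have h4 : ‖L w‖ / ‖L w'‖ = 1 := by
    have : (‖L w‖ / ‖L w'‖ - 1) * pK w = 0 := by linarith
    rcases mul_eq_zero.mp this with h | h
    · linarith
    · exact absurd h p1.ne'
  rw [h4, one_smul] at hc
  exact hc

theorem rad_surj (hL : ∀ w, L w (Fin.last m) = ∑ r, w.1 r)
    (x : EuclideanSpace ℝ (Fin (m + 1))) (hx : x (Fin.last m) ≤ 0) :
    ∃ w : (ZMod m → ℝ) × ℝ, ∑ r, w.1 r ≤ 0 ∧ rad L w = x := by
  by_cases h0 : x = 0
  · exact ⟨0, by simp, by simp [rad, h0]⟩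
  have hw0 : ∑ r, (L.symm x).1 r ≤ 0 := by rw [← hL]; simpa using hx
  have hne : L.symm x ≠ 0 := by simpa using h0
  have hp := pK_pos _ hw0 hne
  have hn : 0 < ‖x‖ := norm_pos_iff.mpr h0
  have hc : 0 < ‖x‖ / pK (L.symm x) := by positivity
  refine ⟨(‖x‖ / pK (L.symm x)) • L.symm x, ?_, ?_⟩
  · rw [← hL, map_smul]
    simp only [ContinuousLinearEquiv.apply_symm_apply, PiLp.smul_apply, smul_eq_mul]
    exact mul_nonpos_of_nonneg_of_nonpos hc.le hx
  · rw [rad, pK_smul _ hc, map_smul, ContinuousLinearEquiv.apply_symm_apply, norm_smul,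
      Real.norm_of_nonneg hc.le, smul_smul]
    have : ‖x‖ / pK (L.symm x) * pK (L.symm x) / (‖x‖ / pK (L.symm x) * ‖x‖) *
        (‖x‖ / pK (L.symm x)) = 1 := by field_simp
    rw [this, one_smul]

theorem rad_last (hL : ∀ w, L w (Fin.last m) = ∑ r, w.1 r)
    (w : (ZMod m → ℝ) × ℝ) (hw : ∑ r, w.1 r ≤ 0) :
    rad L w (Fin.last m) ≤ 0 ∧ (rad L w (Fin.last m) = 0 ↔ ∑ r, w.1 r = 0) := by
  by_cases h0 : w = 0
  · subst h0; simp [rad]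
  have hp := pK_pos w hw h0
  have hn : 0 < ‖L w‖ := norm_pos_iff.mpr (by simpa using h0)
  have hc : 0 < pK w / ‖L w‖ := by positivity
  simp only [rad, PiLp.smul_apply, smul_eq_mul, hL]
  refine ⟨mul_nonpos_of_nonneg_of_nonpos hc.le hw, ?_⟩
  rw [mul_eq_zero]
  constructor
  · rintro (h | h)
    · exact absurd h hc.ne'
    · exact h
  · exact Or.inr

end radial

/-! ### From the half ball to the ball -/

section half

def zeta (x : EuclideanSpace ℝ (Fin (m + 1))) : ℝ := ‖x‖ ^ 2 - x (Fin.last m) ^ 2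

def sh (x : EuclideanSpace ℝ (Fin (m + 1))) (a : ℝ) : EuclideanSpace ℝ (Fin (m + 1)) :=
  x + a • EuclideanSpace.single (Fin.last m) (1 : ℝ)

theorem sh_last (x : EuclideanSpace ℝ (Fin (m + 1))) (a : ℝ) :
    sh x a (Fin.last m) = x (Fin.last m) + a := by
  simp [sh]

theorem zeta_eq (x : EuclideanSpace ℝ (Fin (m + 1))) :
    zeta x = ∑ i : Fin m, x (Fin.castSucc i) ^ 2 := by
  rw [zeta, EuclideanSpace.real_norm_sq_eq, Fin.sum_univ_castSucc]
  ring

theorem zeta_sh (x : EuclideanSpace ℝ (Fin (m + 1))) (a : ℝ) : zeta (sh x a) = zeta x := by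
  rw [zeta_eq, zeta_eq]
  apply sum_congr rfl
  intro i _
  have : Fin.castSucc i ≠ Fin.last m := (Fin.castSucc_lt_last i).ne
  simp [sh, this]

def psi (x : EuclideanSpace ℝ (Fin (m + 1))) : EuclideanSpace ℝ (Fin (m + 1)) :=
  sh x (x (Fin.last m) + √(1 - zeta x))

theorem psi_continuous : Continuous (psi : EuclideanSpace ℝ (Fin (m + 1)) → _) := by
  unfold psi sh zeta
  fun_prop

theorem psi_inj (x x' : EuclideanSpace ℝ (Fin (m + 1))) (h : psi x = psi x') : x = x' := by
  have hz : zeta x = zeta x' := by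
    have := congrArg zeta h
    simpa [psi, zeta_sh] using this
  have hl : psi x (Fin.last m) = psi x' (Fin.last m) := by rw [h]
  simp only [psi, sh_last, hz] at hl
  have hl' : x (Fin.last m) = x' (Fin.last m) := by linarith
  simp only [psi, sh, hz, hl'] at h
  exact add_right_cancel h

theorem norm_sq (x : EuclideanSpace ℝ (Fin (m + 1))) : ‖x‖ ^ 2 = zeta x + x (Fin.last m) ^ 2 := by
  rw [zeta]; ring

theorem zeta_le (x : EuclideanSpace ℝ (Fin (m + 1))) (hx : ‖x‖ ≤ 1) : zeta x ≤ 1 := by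
  have := norm_sq x
  nlinarith [norm_nonneg x, sq_nonneg (x (Fin.last m))]

theorem psi_spec (x : EuclideanSpace ℝ (Fin (m + 1))) (hx : ‖x‖ ≤ 1) (hy : x (Fin.last m) ≤ 0) :
    ‖psi x‖ ≤ 1 ∧ (‖psi x‖ = 1 ↔ x (Fin.last m) = 0 ∨ ‖x‖ = 1) ∧
      ((‖psi x‖ = 1 ∧ 0 ≤ psi x (Fin.last m)) ↔ x (Fin.last m) = 0) := by
  have hz := zeta_le x hx
  have n1 := norm_sq x
  have n2 := norm_sq (psi x)
  have hl : psi x (Fin.last m) = 2 * x (Fin.last m) + √(1 - zeta x) := by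
    rw [psi, sh_last]; ring
  have hzp : zeta (psi x) = zeta x := zeta_sh _ _
  rw [hzp] at n2
  have hs := Real.sq_sqrt (show 0 ≤ 1 - zeta x by linarith)
  have hs0 := Real.sqrt_nonneg (1 - zeta x)
  rw [hl] at n2 ⊢
  generalize √(1 - zeta x) = q at *
  generalize x (Fin.last m) = y at *
  generalize zeta x = z at *
  have a1 := norm_nonneg x
  have a2 := norm_nonneg (psi x)
  generalize ‖x‖ = a at *
  generalize ‖psi x‖ = b at *
  have hyq : -q ≤ y := by
    apply (abs_le.mp (abs_le_of_sq_le_sq (show y ^ 2 ≤ q ^ 2 by nlinarith) hs0)).1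
  have key : b ^ 2 = 1 + 4 * (y * (y + q)) := by nlinarith
  have hb : b = 1 ↔ y * (y + q) = 0 := by
    constructor
    · intro h; rw [h] at key; linarith
    · intro h
      have : (b - 1) * (b + 1) = 0 := by rw [h] at key; linarith
      rcases mul_eq_zero.mp this with h | h <;> linarith
  have ha : a = 1 ↔ y + q = 0 := by
    constructor
    · intro h
      rw [h] at n1
      have : (q + y) * (q - y) = 0 := by linarith
      rcases mul_eq_zero.mp this with h | h <;> linarith
    · intro h
      have hq : q = -y := by linarith
      have : (a - 1) * (a + 1) = 0 := by rw [hq] at hs; linarith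
      rcases mul_eq_zero.mp this with h | h <;> linarith
  refine ⟨?_, ?_, ?_⟩
  · have : y * (y + q) ≤ 0 := mul_nonpos_of_nonpos_of_nonneg hy (by linarith)
    nlinarith
  · rw [hb, ha, mul_eq_zero]
  · rw [hb, mul_eq_zero]
    constructor
    · rintro ⟨h | h, h'⟩ <;> linarith
    · intro h
      exact ⟨Or.inl h, by rw [h]; linarith⟩

theorem psi_surj (x : EuclideanSpace ℝ (Fin (m + 1))) (hx : ‖x‖ ≤ 1) :
    ∃ x', ‖x'‖ ≤ 1 ∧ x' (Fin.last m) ≤ 0 ∧ psi x' = x := by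
  have hz := zeta_le x hx
  have n1 := norm_sq x
  have hs := Real.sq_sqrt (show 0 ≤ 1 - zeta x by linarith)
  have hs0 := Real.sqrt_nonneg (1 - zeta x)
  have hy : |x (Fin.last m)| ≤ √(1 - zeta x) :=
    abs_le_of_sq_le_sq (by nlinarith [norm_nonneg x]) hs0
  obtain ⟨y1, y2⟩ := abs_le.mp hy
  have hl := sh_last x ((-x (Fin.last m) - √(1 - zeta x)) / 2)
  have hzz := zeta_sh x ((-x (Fin.last m) - √(1 - zeta x)) / 2)
  refine ⟨sh x ((-x (Fin.last m) - √(1 - zeta x)) / 2), ?_, ?_, ?_⟩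
  · have n2 := norm_sq (sh x ((-x (Fin.last m) - √(1 - zeta x)) / 2))
    rw [hzz, hl] at n2
    have : (x (Fin.last m) + (-x (Fin.last m) - √(1 - zeta x)) / 2) ^ 2 ≤ 1 - zeta x := by
      refine le_of_le_of_eq ?_ hs
      apply sq_le_sq'
      · linarith
      · linarith
    nlinarith [norm_nonneg (sh x ((-x (Fin.last m) - √(1 - zeta x)) / 2))]
  · rw [hl]; linarith
  · rw [psi, hl, hzz]
    unfold sh
    rw [add_assoc, ← add_smul]
    have : (-x (Fin.last m) - √(1 - zeta x)) / 2 +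
      (x (Fin.last m) + (-x (Fin.last m) - √(1 - zeta x)) / 2 + √(1 - zeta x)) = 0 := by ring
    rw [this, zero_smul, add_zero]

end half

/-! ### Assembly -/

section assembly
variable (L : ((ZMod m → ℝ) × ℝ) ≃L[ℝ] EuclideanSpace ℝ (Fin (m + 1)))

def G (s : ZMod m → ℝ) (h : ℝ) : EuclideanSpace ℝ (Fin (m + 1)) :=
  psi (rad L (tr (bend s h) h))

def FF (p : Fin (m + 2) × TopSimplex (m + 1)) : EuclideanSpace ℝ (Fin (m + 1)) :=
  G L (S p.1 p.2.1) (ht p.1 p.2.1)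

theorem QP_of (p : Fin (m + 2) × TopSimplex (m + 1)) : QP (S p.1 p.2.1) (ht p.1 p.2.1) := by
  have hs := S_nonneg (p.1 : ℕ) p.2.2.1
  refine ⟨hs, sum_le _ _, ?_, ?_⟩
  · have h1 := hk_mono hs (Nat.zero_le p.1)
    have h2 := ht_ge (p.1 : ℕ) p.2
    have : hk (S (p.1 : ℕ) p.2.1) 0 = 0 := by simp [hk]
    linarith
  · have h2 := ht_le' (p.1 : ℕ) p.2
    exact h2.trans (hk_mono hs (by omega))

theorem FF_continuous : Continuous (FF L) := by
  rw [continuous_prod_of_discrete_left]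
  intro k
  have hval : ∀ i, Continuous fun t : TopSimplex (m + 1) => t.1 i := fun i =>
    (continuous_apply i).comp continuous_subtype_val
  have hS : ∀ r, Continuous fun t : TopSimplex (m + 1) => S (k : ℕ) t.1 r := by
    intro r
    unfold S
    split_ifs
    · exact (hval _).add (hval _)
    · exact (hval _).add continuous_const
  have hH : Continuous fun t : TopSimplex (m + 1) => ht (k : ℕ) t.1 := by
    unfold ht hk
    exact (continuous_finsetSum _ fun j _ => hS _).add (hval _)
  unfold FF G
  refine psi_continuous.comp ((rad_continuous L).comp ?_)
  unfold tr bend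
  refine Continuous.prodMk (continuous_pi fun r => ?_) (hH.sub continuous_const)
  refine Continuous.sub (Continuous.sub (hS r) ?_) continuous_const
  split_ifs
  · exact (((hS 1).sub hH).max continuous_const).div_const 2
  · exact continuous_const

theorem G_spec (hL : ∀ w, L w (Fin.last m) = ∑ r, w.1 r)
    {s : ZMod m → ℝ} {h : ℝ} (H : QP s h) :
    ‖G L s h‖ ≤ 1 ∧
    (‖G L s h‖ = 1 ↔ (∑ r, s r = 1 ∨ (∃ r, s r = 0) ∨ h = 0 ∨ h = hk s (m + 2))) ∧
    ((‖G L s h‖ = 1 ∧ 0 ≤ G L s h (Fin.last m)) ↔ (∑ r, s r = 1 ∧ s 1 ≤ h)) := by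
  have K := KP_bend H
  obtain ⟨k1, k2⟩ := (KP_iff _ _).mp K
  have hn := norm_rad L _ k1
  obtain ⟨l1, l2⟩ := rad_last L hL _ k1
  obtain ⟨a, b, c⟩ := psi_spec _ (by rw [hn]; exact k2) l1
  refine ⟨a, ?_, ?_⟩
  · rw [bd_bend H, KP_bd K]
    unfold G
    rw [b, l2, hn]
  · rw [edge_bend H]
    unfold G
    rw [c, l2, tr_sum, sub_eq_zero]

theorem G_inj (_hL : ∀ w, L w (Fin.last m) = ∑ r, w.1 r)
    {s s' : ZMod m → ℝ} {h h' : ℝ} (H : QP s h) (H' : QP s' h')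
    (e : G L s h = G L s' h') : s = s' ∧ h = h' := by
  have k1 := ((KP_iff _ _).mp (KP_bend H)).1
  have k1' := ((KP_iff _ _).mp (KP_bend H')).1
  have e2 := rad_inj L _ _ k1 k1' (psi_inj _ _ e)
  have e3 : h = h' := by
    have := congrArg Prod.snd e2
    simpa [tr] using this
  subst e3
  refine ⟨?_, rfl⟩
  have e4 : bend s h = bend s' h := by
    funext r
    have := congrFun (congrArg Prod.fst e2) r
    simpa [tr] using this
  rw [← unbend_bend s h, e4, unbend_bend]

theorem G_surj (hL : ∀ w, L w (Fin.last m) = ∑ r, w.1 r)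
    (x : EuclideanSpace ℝ (Fin (m + 1))) (hx : ‖x‖ ≤ 1) :
    ∃ s h, QP s h ∧ G L s h = x := by
  obtain ⟨x', h1, h2, rfl⟩ := psi_surj x hx
  obtain ⟨w, w1, rfl⟩ := rad_surj L hL x' h2
  have e : tr (fun r => w.1 r + 1 / m) (w.2 + 2 / m) = w := by
    simp [tr]
  rw [norm_rad L w w1] at h1
  have K : KP (fun r => w.1 r + 1 / m) (w.2 + 2 / m) := by
    rw [KP_iff, e]; exact ⟨w1, h1⟩
  refine ⟨_, _, QP_unbend K, ?_⟩
  rw [G, bend_unbend, e]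

end assembly

theorem main_case (m : ℕ) [NeZero m] :
    ∃ e : FoldingPolytope (m + 1) ≃ₜ
        (Metric.closedBall (0 : EuclideanSpace ℝ (Fin (m + 1))) 1),
      ⇑e '' foldingBoundary (m + 1) =
        {x : Metric.closedBall (0 : EuclideanSpace ℝ (Fin (m + 1))) 1 |
          (x : EuclideanSpace ℝ (Fin (m + 1))) ∈
            Metric.sphere (0 : EuclideanSpace ℝ (Fin (m + 1))) 1} ∧
      ⇑e '' foldingEdge (m + 1) =
        {x : Metric.closedBall (0 : EuclideanSpace ℝ (Fin (m + 1))) 1 |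
          (x : EuclideanSpace ℝ (Fin (m + 1))) ∈
            Metric.sphere (0 : EuclideanSpace ℝ (Fin (m + 1))) 1 ∧
          0 ≤ (x : EuclideanSpace ℝ (Fin (m + 1))) ⟨m + 1 - 1, by omega⟩} := by
  obtain ⟨L, hL⟩ := exists_L m
  refine finish (m + 1) (by omega) (FF L) (FF_continuous L) ?_ ?_ ?_ ?_ ?_ ?_
  · intro p q h
    obtain ⟨a, b⟩ := eq_of_rel p q h
    rw [FF, FF, a, b]
  · intro p q h
    obtain ⟨a, b⟩ := G_inj L hL (QP_of p) (QP_of q) h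
    exact mk_eq p q a b
  · intro p
    exact (G_spec L hL (QP_of p)).1
  · intro x hx
    obtain ⟨s, h, H, rfl⟩ := G_surj L hL x hx
    obtain ⟨p, rfl, rfl⟩ := surj_Q s h H.1 H.2.1 H.2.2.1 H.2.2.2
    exact ⟨p, rfl⟩
  · intro x hx
    obtain ⟨s, h, H, rfl⟩ := G_surj L hL x hx
    rw [(G_spec L hL H).2.1, ← bd_iff s h H.1 H.2.1 H.2.2.1 H.2.2.2]
    constructor
    · rintro ⟨p, hp, he⟩
      exact ⟨p, hp, G_inj L hL (QP_of p) H he⟩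
    · rintro ⟨p, hp, h1, h2⟩
      exact ⟨p, hp, by rw [FF, h1, h2]⟩
  · intro x hx
    obtain ⟨s, h, H, rfl⟩ := G_surj L hL x hx
    have := (G_spec L hL H).2.2
    rw [← edge_iff s h H.1 H.2.1 H.2.2.1 H.2.2.2] at this
    refine Iff.trans ?_ this.symm
    constructor
    · rintro ⟨p, hp, he⟩
      exact ⟨p, hp, G_inj L hL (QP_of p) H he⟩
    · rintro ⟨p, hp, h1, h2⟩
      exact ⟨p, hp, by rw [FF, h1, h2]⟩

/-! ### The case `n = 1` -/

def sg (k : Fin 2) : ℝ := if k = 0 then -1 else 1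

def F1 (p : Fin 2 × TopSimplex 1) : EuclideanSpace ℝ (Fin 1) :=
  EuclideanSpace.single 0 (sg p.1 * p.2.1 1)

theorem t_sum (t : TopSimplex 1) : t.1 0 + t.1 1 = 1 := by
  have := t.2.2
  rwa [Fin.sum_univ_two] at this

theorem t_ext (t t' : TopSimplex 1) (h : t.1 1 = t'.1 1) : t = t' := by
  apply Subtype.ext
  funext i
  have h1 := t_sum t
  have h2 := t_sum t'
  fin_cases i
  · show t.1 0 = t'.1 0
    linarith
  · exact h

def tmk (a : ℝ) (h0 : 0 ≤ a) (h1 : a ≤ 1) : TopSimplex 1 :=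
  ⟨![1 - a, a], by
    refine ⟨?_, by simp⟩
    intro i
    fin_cases i
    · show 0 ≤ 1 - a
      linarith
    · exact h0⟩

theorem tmk_one (a : ℝ) (h0 : 0 ≤ a) (h1 : a ≤ 1) : (tmk a h0 h1).1 1 = a := rfl

theorem tmk_zero (a : ℝ) (h0 : 0 ≤ a) (h1 : a ≤ 1) : (tmk a h0 h1).1 0 = 1 - a := rfl

theorem F1_eq (p : Fin 2 × TopSimplex 1) (x : EuclideanSpace ℝ (Fin 1)) :
    F1 p = x ↔ sg p.1 * p.2.1 1 = x 0 := by
  constructor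
  · rintro rfl; simp [F1]
  · intro h
    ext i
    fin_cases i
    simp [F1, h]

theorem norm1 (x : EuclideanSpace ℝ (Fin 1)) : ‖x‖ = |x 0| := by
  rw [EuclideanSpace.norm_eq]
  simp [Real.sqrt_sq_eq_abs]

theorem abs_sg (k : Fin 2) (a : ℝ) (ha : 0 ≤ a) : |sg k * a| = a := by
  unfold sg; split_ifs <;> simp [abs_of_nonneg ha]

theorem F1_norm (p : Fin 2 × TopSimplex 1) : ‖F1 p‖ = p.2.1 1 := by
  rw [norm1, ← ((F1_eq p _).mp rfl), abs_sg _ _ (p.2.2.1 1)]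

theorem F1_surj (x : EuclideanSpace ℝ (Fin 1)) (hx : ‖x‖ ≤ 1) :
    ∃ p : Fin 2 × TopSimplex 1, F1 p = x ∧ (0 < x 0 → p.1 = 1) := by
  rw [norm1] at hx
  obtain ⟨h1, h2⟩ := abs_le.mp hx
  by_cases h : 0 < x 0
  · refine ⟨(1, tmk (x 0) h.le h2), ?_, fun _ => rfl⟩
    rw [F1_eq, tmk_one]
    simp [sg]
  · refine ⟨(0, tmk (-x 0) (by linarith) (by linarith)), ?_, fun h' => absurd h' h⟩
    rw [F1_eq, tmk_one]
    simp [sg]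

theorem glue1 (t t' : TopSimplex 1) (h1 : t.1 1 = 0) (h2 : t'.1 1 = 0) : GluePt 1 t t' := by
  refine ⟨h1, h2, ?_, ?_⟩
  · have := t_sum t
    have := t_sum t'
    linarith
  · intro i hi1 hi2
    omega

theorem one_case :
    ∃ e : FoldingPolytope 1 ≃ₜ (Metric.closedBall (0 : EuclideanSpace ℝ (Fin 1)) 1),
      ⇑e '' foldingBoundary 1 =
        {x : Metric.closedBall (0 : EuclideanSpace ℝ (Fin 1)) 1 |
          (x : EuclideanSpace ℝ (Fin 1)) ∈
            Metric.sphere (0 : EuclideanSpace ℝ (Fin 1)) 1} ∧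
      ⇑e '' foldingEdge 1 =
        {x : Metric.closedBall (0 : EuclideanSpace ℝ (Fin 1)) 1 |
          (x : EuclideanSpace ℝ (Fin 1)) ∈
            Metric.sphere (0 : EuclideanSpace ℝ (Fin 1)) 1 ∧
          0 ≤ (x : EuclideanSpace ℝ (Fin 1)) ⟨1 - 1, by omega⟩} := by
  have two : ∀ k : Fin 2, k = 0 ∨ k = 1 := by decide
  refine finish 1 le_rfl F1 ?_ ?_ ?_ ?_ ?_ ?_ ?_
  · rw [continuous_prod_of_discrete_left]
    intro k
    have hval : Continuous fun t : TopSimplex 1 => t.1 1 :=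
      (continuous_apply _).comp continuous_subtype_val
    have h2 : Continuous fun t : TopSimplex 1 => sg k * t.1 1 := continuous_const.mul hval
    have : (fun t : TopSimplex 1 => F1 (k, t)) =
        fun t => (sg k * t.1 1) • EuclideanSpace.single (0 : Fin 1) (1 : ℝ) := by
      funext t
      rw [F1_eq]
      simp
    rw [this]
    exact h2.smul continuous_const
  · rintro p q (⟨-, h1, h2, -⟩ | ⟨-, h1, h2, -⟩)
    · have h1 : p.2.1 1 = 0 := h1
      simp [F1, h1, h2]
    · have h1 : q.2.1 1 = 0 := h1
      simp [F1, h1, h2]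
  · rintro ⟨k, t⟩ ⟨k', t'⟩ h
    have hn : t.1 1 = t'.1 1 := by
      have := congrArg norm h
      rwa [F1_norm, F1_norm] at this
    have hs : sg k * t.1 1 = sg k' * t'.1 1 := by
      have := (F1_eq _ _).mp h
      simpa [F1] using this
    by_cases h0 : t.1 1 = 0
    · have h0' : t'.1 1 = 0 := by rw [← hn, h0]
      rcases two k with rfl | rfl <;> rcases two k' with rfl | rfl
      · rw [t_ext t t' hn]
      · exact Quot.sound (Or.inl ⟨rfl, glue1 _ _ h0 h0'⟩)
      · exact Quot.sound (Or.inr ⟨rfl, glue1 _ _ h0' h0⟩)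
      · rw [t_ext t t' hn]
    · rw [← hn] at hs
      have := mul_right_cancel₀ h0 hs
      rcases two k with rfl | rfl <;> rcases two k' with rfl | rfl
      · rw [t_ext t t' hn]
      · simp [sg] at this; linarith
      · simp [sg] at this; linarith
      · rw [t_ext t t' hn]
  · intro p
    rw [F1_norm]
    have := t_sum p.2
    have := p.2.2.1 0
    linarith
  · intro x hx
    obtain ⟨p, hp, -⟩ := F1_surj x hx
    exact ⟨p, hp⟩
  · intro x hx
    constructor
    · rintro ⟨p, ⟨j, hj, h1, h2⟩, rfl⟩
      rw [F1_norm]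
      have := t_sum p.2
      rcases two j with rfl | rfl
      · linarith
      · exfalso
        rcases two p.1 with h | h
        · exact h1 ⟨rfl, by rw [h]; decide⟩
        · exact h2 ⟨rfl, by rw [h]; decide⟩
    · intro h
      obtain ⟨p, rfl, -⟩ := F1_surj x hx
      rw [F1_norm] at h
      refine ⟨p, ⟨0, ?_, ?_, ?_⟩, rfl⟩
      · have := t_sum p.2
        linarith
      · rintro ⟨h, -⟩; revert h; decide
      · rintro ⟨h, -⟩; revert h; decide
  · intro x hx
    constructor
    · rintro ⟨p, ⟨hk, hj⟩, rfl⟩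
      have ht := t_sum p.2
      have h1 : p.1 = 1 := by
        rcases two p.1 with h | h
        · exact absurd h hk
        · exact h
      refine ⟨?_, ?_⟩
      · rw [F1_norm]; linarith
      · change 0 ≤ F1 p 0
        rw [← (F1_eq p _).mp rfl, h1]
        simp [sg]
        linarith
    · rintro ⟨h, hpos⟩
      change 0 ≤ x 0 at hpos
      obtain ⟨p, rfl, hp⟩ := F1_surj x hx
      have hx0 : 0 < F1 p 0 := by
        rw [norm1, abs_of_nonneg hpos] at h
        linarith
      rw [F1_norm] at h
      have ht := t_sum p.2
      refine ⟨p, ⟨?_, by linarith⟩, rfl⟩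
      rw [hp hx0]; decide

end FP
theorem folding_polytope_triple_homeomorphic_to_ball_sphere_hemisphere
    (n : ℕ) (hn : 1 ≤ n) :
    ∃ e : FoldingPolytope n ≃ₜ (Metric.closedBall (0 : EuclideanSpace ℝ (Fin n)) 1),
      ⇑e '' foldingBoundary n =
        {x : Metric.closedBall (0 : EuclideanSpace ℝ (Fin n)) 1 |
          (x : EuclideanSpace ℝ (Fin n)) ∈
            Metric.sphere (0 : EuclideanSpace ℝ (Fin n)) 1} ∧
      ⇑e '' foldingEdge n =
        {x : Metric.closedBall (0 : EuclideanSpace ℝ (Fin n)) 1 |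
          (x : EuclideanSpace ℝ (Fin n)) ∈
            Metric.sphere (0 : EuclideanSpace ℝ (Fin n)) 1 ∧
          0 ≤ (x : EuclideanSpace ℝ (Fin n)) ⟨n - 1, by omega⟩} := by
  obtain ⟨m, rfl⟩ : ∃ m, n = m + 1 := ⟨n - 1, by omega⟩
  rcases Nat.eq_zero_or_pos m with rfl | hm
  · exact FP.one_case
  · have : NeZero m := ⟨by omega⟩
    exact FP.main_case m

end
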